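/- Differentiability of the value function at regular points: let x ∈ Ω and suppose that A_x admits a unique minimizer φ^x on D_0^{1,2}(1,+∞), and that φ^x has a (right) derivative φ̇^x(1) at t = 1. Then v is differentiable at x and its differential is the linear map z ↦ −⟨a + φ̇^x(1), z⟩_M on X; equivalently, in terms of the motion γ^x(t) = a t + φ^x(t) + x − a, the gradient of v at x with respect to the mass inner product equals −γ̇^x(1). -/

import Mathlib

open MeasureTheory Real Set Filter Topology
open scoped RealInnerProductSpace ENNReal

noncomputable section
namespace NBodyHJ

attribute [local instance] Classical.propDecidable

abbrev Conf (d N : ℕ) := Fin N → EuclideanSpace ℝ (Fin d)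

variable {d N : ℕ}

/-- The mass inner product on the configuration space. -/
def minner (m : Fin N → ℝ) (x y : Conf d N) : ℝ := ∑ i, m i * ⟪x i, y i⟫

/-- The mass norm on the configuration space. -/
def mnorm (m : Fin N → ℝ) (x : Conf d N) : ℝ := Real.sqrt (minner m x x)

/-- Membership in the zero-barycenter configuration space `X`. -/
def inX (m : Fin N → ℝ) (x : Conf d N) : Prop := ∑ i, m i • x i = 0

/-- Collision configurations. -/
def collision (x : Conf d N) : Prop := ∃ i j, i ≠ j ∧ x i = x j

/-- Membership in the collision-free zero-barycenter space `Ω`. -/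
def inOmega (m : Fin N → ℝ) (x : Conf d N) : Prop := inX m x ∧ ¬ collision x

/-- The Newtonian potential (with junk value `0` for a colliding pair). -/
def U (m : Fin N → ℝ) (x : Conf d N) : ℝ :=
  ∑ i : Fin N, ∑ j : Fin N, if i < j then m i * m j / ‖x i - x j‖ else 0

/-- The time interval `(t₀, T)`, where `T ∈ (t₀, +∞]` is extended-real. -/
def timeSet (t0 : ℝ) (T : EReal) : Set ℝ := {t : ℝ | t0 < t ∧ (t : EReal) < T}

/-- Membership of the pair (curve, derivative) `(φ, φ')` in `D₀^{1,2}(t₀, T)`: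
`φ` starts at `0`, takes values in `X`, is the integral of `φ'` (hence locally
absolutely continuous), and `φ'` has finite `L²` mass norm on `(t₀, T)`. -/
def InD (m : Fin N → ℝ) (t0 : ℝ) (T : EReal) (φ φ' : ℝ → Conf d N) : Prop :=
  φ t0 = 0 ∧
  (∀ t : ℝ, t0 ≤ t → (t : EReal) < T → inX m (φ t)) ∧
  (∀ t : ℝ, t0 ≤ t → (t : EReal) < T → φ t = ∫ s in Set.Ioc t0 t, φ' s) ∧
  (∀ t : ℝ, t0 ≤ t → (t : EReal) < T → IntegrableOn φ' (Set.Ioc t0 t)) ∧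
  IntegrableOn (fun t => (mnorm m (φ' t)) ^ 2) (timeSet t0 T)

/-- The norm `‖φ‖_{D_T}`. -/
def Dnorm (m : Fin N → ℝ) (t0 : ℝ) (T : EReal) (φ' : ℝ → Conf d N) : ℝ :=
  Real.sqrt (∫ t in timeSet t0 T, (mnorm m (φ' t)) ^ 2)

/-- The motion `γ(t) = φ(t) + t a + x - a` associated with `φ` in the hyperbolic case. -/
def hypCurve (a x : Conf d N) (φ : ℝ → Conf d N) (t : ℝ) : Conf d N :=
  φ t + t • a + x - a

/-- The integrand of the hyperbolic renormalized Lagrangian action. -/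
def hypIntegrand (m : Fin N → ℝ) (a x : Conf d N) (φ φ' : ℝ → Conf d N) (t : ℝ) : ℝ :=
  (mnorm m (φ' t)) ^ 2 / 2 + U m (hypCurve a x φ t) - U m (t • a)

/-- The hyperbolic renormalized Lagrangian action `A_{x,[1,T]}(φ)`, with values in
`ℝ ∪ {+∞}` : it equals the integral of the renormalized Lagrangian if this integrand is
integrable and the motion is a.e. collision-free, and `+∞` otherwise. -/
def hypAction (m : Fin N → ℝ) (a x : Conf d N) (T : EReal) (φ φ' : ℝ → Conf d N) : EReal :=
  if IntegrableOn (hypIntegrand m a x φ φ') (timeSet 1 T) ∧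
      (∀ᵐ t ∂volume.restrict (timeSet 1 T), ¬ collision (hypCurve a x φ t))
  then ((∫ t in timeSet 1 T, hypIntegrand m a x φ φ' t : ℝ) : EReal)
  else (⊤ : EReal)

/-- The infimum of the hyperbolic renormalized action over `D₀^{1,2}(1,T)`. -/
def hypInf (m : Fin N → ℝ) (a x : Conf d N) (T : EReal) : EReal :=
  ⨅ (φ : ℝ → Conf d N) (φ' : ℝ → Conf d N) (_ : InD m 1 T φ φ'), hypAction m a x T φ φ'

/-- The renormalized value function `v(x)` in the hyperbolic case. -/
def hypValue (m : Fin N → ℝ) (a x : Conf d N) : ℝ :=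
  (hypInf m a x ⊤).toReal - minner m a x


/-- The zero-barycenter configuration space `X`, as a set. -/
def setX (m : Fin N → ℝ) : Set (Conf d N) := {x | inX m x}

/-- `p ∈ D⁻v(x)` : the Fréchet subdifferential of `v` at `x`, computed within `X` and with
respect to the mass inner product; the condition states
`liminf_{y → x} (v(y) − v(x) − ⟨p, y − x⟩_M)/‖y − x‖_M ≥ 0`. -/
def InSubdiff (m : Fin N → ℝ) (v : Conf d N → ℝ) (x p : Conf d N) : Prop :=
  ∀ ε > (0:ℝ), ∀ᶠ y in nhdsWithin x (setX m \ {x}),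
    -(ε * mnorm m (y - x)) ≤ v y - v x - minner m p (y - x)

/-- `p ∈ D⁺v(x)` : the Fréchet superdifferential of `v` at `x`, computed within `X` and with
respect to the mass inner product; the condition states
`limsup_{y → x} (v(y) − v(x) − ⟨p, y − x⟩_M)/‖y − x‖_M ≤ 0`. -/
def InSuperdiff (m : Fin N → ℝ) (v : Conf d N → ℝ) (x p : Conf d N) : Prop :=
  ∀ ε > (0:ℝ), ∀ᶠ y in nhdsWithin x (setX m \ {x}),
    v y - v x - minner m p (y - x) ≤ ε * mnorm m (y - x)

/-!
The argument compares the renormalized actions at two nearby initial configurations `y` and `y'`: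
adding to a curve `φ` the displacement `y - y'`, switched on linearly over `[1, 1 + δ]`, leaves
the motion unchanged after time `1 + δ` and changes the action by at most
`⟨φ(1 + δ) / δ, y - y'⟩_M + ε ‖y - y'‖_M`, provided `δ` is small and then `y`, `y'` are close
enough to `x`.

Shifting the minimizer from `x` to `y`, where `φˣ(1 + δ) / δ` is close to `φ̇ˣ(1)`, shows that
`-(a + φ̇ˣ(1))` is a supergradient of `v` at `x`. Shifting an almost minimizer `χ` from `y` to `x`
shows that it is a subgradient, once `χ(1 + δ)` is known to be close to `φˣ(1 + δ)`. This is where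
uniqueness enters: the action is coercive in the energy, so almost minimizers converge weakly along
subsequences as `y → x`, and by Fatou's lemma the limit is a minimizer at `x`, that is, `φˣ`.
-/

/-! ### Weak convergence in Hilbert spaces -/

section WeakConvergence

variable {H : Type*} [NormedAddCommGroup H] [InnerProductSpace ℝ H]

lemma exists_subseq_tendsto_inner [CompleteSpace H] [TopologicalSpace.SeparableSpace H]
    {f : ℕ → H} {K : ℝ} (hf : ∀ n, ‖f n‖ ≤ K) :
    ∃ g : H, ∃ σ : ℕ → ℕ, StrictMono σ ∧
      ∀ h : H, Tendsto (fun n => ⟪f (σ n), h⟫) atTop (𝓝 ⟪g, h⟫) := by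
  have hmem : ∀ n, StrongDual.toWeakDual (InnerProductSpace.toDual ℝ H (f n)) ∈
      WeakDual.toStrongDual ⁻¹' Metric.closedBall (0 : StrongDual ℝ H) K := fun n => by
    simpa using hf n
  obtain ⟨L, -, σ, hσ, hL⟩ := WeakDual.isSeqCompact_closedBall ℝ H 0 K hmem
  refine ⟨(InnerProductSpace.toDual ℝ H).symm (WeakDual.toStrongDual L), σ, hσ, fun h => ?_⟩
  rw [InnerProductSpace.toDual_symm_apply]
  exact (WeakDual.eval_continuous h).continuousAt.tendsto.comp hL

lemma norm_sq_le_of_tendsto_inner {ι : Type*} {l : Filter ι} [l.NeBot] {f : ι → H} {g : H} {E : ℝ}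
    (h : Tendsto (fun n => ⟪f n, g⟫) l (𝓝 ⟪g, g⟫)) (hE : Tendsto (fun n => ‖f n‖ ^ 2) l (𝓝 E)) :
    ‖g‖ ^ 2 ≤ E := by
  have hlim := (hE.sub (h.const_mul 2)).add_const (‖g‖ ^ 2)
  have hnonneg : 0 ≤ E - 2 * ⟪g, g⟫ + ‖g‖ ^ 2 := ge_of_tendsto' hlim fun n => by
    rw [← norm_sub_sq_real]; positivity
  rw [real_inner_self_eq_norm_sq] at hnonneg
  linarith

lemma tendsto_of_forall_tendsto_inner [FiniteDimensional ℝ H] {ι : Type*} {l : Filter ι}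
    {f : ι → H} {g : H} (h : ∀ c : H, Tendsto (fun n => ⟪c, f n⟫) l (𝓝 ⟪c, g⟫)) :
    Tendsto f l (𝓝 g) := by
  set b := stdOrthonormalBasis ℝ H
  simpa only [b.sum_repr'] using
    tendsto_finsetSum Finset.univ fun i _ => (h (b i)).smul_const (b i)

variable [CompleteSpace H] {α : Type*} [MeasurableSpace α] {μ : Measure α} {s : Set α}

lemma norm_setIntegral_le_sqrt_mul_norm (hs : MeasurableSet s) (hμs : μ s ≠ ∞) (f : Lp H 2 μ) :
    ‖∫ t in s, f t ∂μ‖ ≤ √(μ.real s) * ‖f‖ := by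
  set c := ∫ t in s, f t ∂μ
  have hsq : ‖c‖ * ‖c‖ ≤ ‖c‖ * (√(μ.real s) * ‖f‖) := calc
    ‖c‖ * ‖c‖ = ⟪indicatorConstLp 2 hs hμs c, f⟫ := by
      rw [L2.inner_indicatorConstLp_eq_inner_setIntegral, real_inner_self_eq_norm_mul_norm]
    _ ≤ ‖indicatorConstLp 2 hs hμs c‖ * ‖f‖ := real_inner_le_norm _ _
    _ = ‖c‖ * (√(μ.real s) * ‖f‖) := by
      rw [norm_indicatorConstLp two_ne_zero ENNReal.ofNat_ne_top, Real.sqrt_eq_rpow]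
      simp only [ENNReal.toReal_ofNat, mul_assoc]
  rcases (norm_nonneg c).eq_or_lt with hc | hc
  · rw [← hc]; positivity
  · exact le_of_mul_le_mul_left hsq hc

lemma tendsto_setIntegral_of_tendsto_inner [FiniteDimensional ℝ H] (hs : MeasurableSet s)
    (hμs : μ s ≠ ∞) {ι : Type*} {l : Filter ι} {f : ι → Lp H 2 μ} {g : Lp H 2 μ}
    (h : ∀ k, Tendsto (fun n => ⟪f n, k⟫) l (𝓝 ⟪g, k⟫)) :
    Tendsto (fun n => ∫ t in s, f n t ∂μ) l (𝓝 (∫ t in s, g t ∂μ)) := by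
  refine tendsto_of_forall_tendsto_inner fun c => ?_
  simpa only [real_inner_comm, ← L2.inner_indicatorConstLp_eq_inner_setIntegral ℝ hs hμs] using
    h (indicatorConstLp 2 hs hμs c)

end WeakConvergence

/-! ### Fatou's lemma with infinite limits -/

section Fatou

variable {α : Type*} [MeasurableSpace α] {μ : Measure α} {F : ℕ → α → ℝ} {f g : α → ℝ}
  {bad : α → Prop} {c : ℕ → ℝ} {p : ℝ}

lemma lintegral_liminf_ofReal_sub_le (hF : ∀ n, Integrable (F n) μ) (hg : Integrable g μ)
    (hgF : ∀ n, g ≤ᵐ[μ] F n) (hFc : ∀ n, ∫ t, F n t ∂μ ≤ c n) (hc : Tendsto c atTop (𝓝 p)) :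
    ∫⁻ t, liminf (fun n => ENNReal.ofReal (F n t - g t)) atTop ∂μ ≤
      ENNReal.ofReal (p - ∫ t, g t ∂μ) := by
  refine (lintegral_liminf_le' fun n => ((hF n).sub hg).aemeasurable.ennreal_ofReal).trans ?_
  rw [← ((ENNReal.tendsto_ofReal (hc.sub_const _)).liminf_eq)]
  refine liminf_le_liminf (Eventually.of_forall fun n => ?_)
  have hnonneg : 0 ≤ᵐ[μ] fun t => F n t - g t := (hgF n).mono fun t ht => sub_nonneg.2 ht
  rw [← ofReal_integral_eq_lintegral_ofReal ((hF n).sub hg) hnonneg, integral_sub' (hF n) hg]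
  exact ENNReal.ofReal_le_ofReal (sub_le_sub_right (hFc n) _)

lemma ae_not_of_tendsto_atTop (hF : ∀ n, Integrable (F n) μ) (hg : Integrable g μ)
    (hgF : ∀ n, g ≤ᵐ[μ] F n) (hFc : ∀ n, ∫ t, F n t ∂μ ≤ c n) (hc : Tendsto c atTop (𝓝 p))
    (hbad : ∀ᵐ t ∂μ, bad t → Tendsto (fun n => F n t) atTop atTop) :
    ∀ᵐ t ∂μ, ¬ bad t := by
  have hmeas : AEMeasurable
      (fun t => liminf (fun n => ENNReal.ofReal (F n t - g t)) atTop) μ := by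
    simp only [liminf_eq_iSup_iInf_of_nat]
    exact .iSup fun n => .biInf _ (to_countable _) fun k _ =>
      ((hF k).sub hg).aemeasurable.ennreal_ofReal
  have hfin := ae_lt_top' hmeas
    ((lintegral_liminf_ofReal_sub_le hF hg hgF hFc hc).trans_lt ENNReal.ofReal_lt_top).ne
  filter_upwards [hfin, hbad] with t ht hbad hb
  have htop : Tendsto (fun n => ENNReal.ofReal (F n t - g t)) atTop (𝓝 ⊤) :=
    ENNReal.tendsto_ofReal_nhds_top.2 (tendsto_atTop_add_const_right _ (-g t) (hbad hb))
  exact ht.ne htop.liminf_eq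

lemma integrable_and_integral_le_of_tendsto (hF : ∀ n, Integrable (F n) μ) (hg : Integrable g μ)
    (hgF : ∀ n, g ≤ᵐ[μ] F n) (hFc : ∀ n, ∫ t, F n t ∂μ ≤ c n) (hc : Tendsto c atTop (𝓝 p))
    (hf : ∀ᵐ t ∂μ, Tendsto (fun n => F n t) atTop (𝓝 (f t))) :
    Integrable f μ ∧ ∫ t, f t ∂μ ≤ p := by
  have hmeas : AEStronglyMeasurable f μ :=
    aestronglyMeasurable_of_tendsto_ae atTop (fun n => (hF n).aestronglyMeasurable) hf
  have hgf : 0 ≤ᵐ[μ] fun t => f t - g t := by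
    filter_upwards [hf, ae_all_iff.2 hgF] with t ht hgF
    exact sub_nonneg.2 (ge_of_tendsto' ht hgF)
  have hle : ∫⁻ t, ENNReal.ofReal (f t - g t) ∂μ ≤ ENNReal.ofReal (p - ∫ t, g t ∂μ) := by
    refine (lintegral_congr_ae ?_).trans_le (lintegral_liminf_ofReal_sub_le hF hg hgF hFc hc)
    filter_upwards [hf] with t ht
    exact (ENNReal.tendsto_ofReal (ht.sub_const _)).liminf_eq.symm
  have hint : Integrable (fun t => f t - g t) μ := ⟨hmeas.sub hg.aestronglyMeasurable, by
    rw [hasFiniteIntegral_iff_ofReal hgf]; exact hle.trans_lt ENNReal.ofReal_lt_top⟩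
  have hfint : Integrable f μ := (hint.add hg).congr (ae_of_all _ fun t => sub_add_cancel _ _)
  have hp : 0 ≤ p - ∫ t, g t ∂μ := ge_of_tendsto' (hc.sub_const _) fun n =>
    sub_nonneg.2 ((integral_mono_ae hg (hF n) (hgF n)).trans (hFc n))
  refine ⟨hfint, ?_⟩
  rw [← ofReal_integral_eq_lintegral_ofReal hint hgf, ENNReal.ofReal_le_ofReal_iff hp,
    integral_sub hfint hg] at hle
  linarith

end Fatou

/-! ### The mass norm -/

/-- The configuration space with the Euclidean norm, as the target of `massEquiv`. -/
abbrev MassSpace (d N : ℕ) := PiLp 2 (fun _ : Fin N => EuclideanSpace ℝ (Fin d))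

/-- The rescaling `r_i ↦ √m_i r_i`, which turns the mass inner product into a Euclidean one and
so makes the Hilbert space library available for it. -/
def massEquiv {m : Fin N → ℝ} (hm : ∀ i, 0 < m i) : Conf d N ≃L[ℝ] MassSpace d N :=
  (ContinuousLinearEquiv.piCongrRight fun i => ContinuousLinearEquiv.smulLeft
    (Units.mk0 (√(m i)) (Real.sqrt_pos.2 (hm i)).ne')).trans
      (PiLp.continuousLinearEquiv 2 ℝ (fun _ : Fin N => EuclideanSpace ℝ (Fin d))).symm

section MassNorm

variable {m : Fin N → ℝ}

lemma inner_massEquiv (hm : ∀ i, 0 < m i) (x y : Conf d N) :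
    ⟪massEquiv hm x, massEquiv hm y⟫ = minner m x y := by
  have happly (z : Conf d N) (i : Fin N) : massEquiv hm z i = √(m i) • z i := rfl
  rw [PiLp.inner_apply, minner]
  refine Finset.sum_congr rfl fun i _ => ?_
  rw [happly, happly, real_inner_smul_left, real_inner_smul_right, ← mul_assoc,
    Real.mul_self_sqrt (hm i).le]

lemma norm_massEquiv (hm : ∀ i, 0 < m i) (x : Conf d N) : ‖massEquiv hm x‖ = mnorm m x := by
  rw [mnorm, ← inner_massEquiv hm, real_inner_self_eq_norm_sq, Real.sqrt_sq (norm_nonneg _)]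

lemma mnorm_nonneg (m : Fin N → ℝ) (x : Conf d N) : 0 ≤ mnorm m x := Real.sqrt_nonneg _

@[simp] lemma mnorm_zero (m : Fin N → ℝ) : mnorm m (0 : Conf d N) = 0 := by simp [mnorm, minner]

lemma mnorm_add_le (hm : ∀ i, 0 < m i) (x y : Conf d N) :
    mnorm m (x + y) ≤ mnorm m x + mnorm m y := by
  simpa only [← norm_massEquiv hm, map_add] using norm_add_le _ _

lemma mnorm_sub_rev (hm : ∀ i, 0 < m i) (x y : Conf d N) :
    mnorm m (x - y) = mnorm m (y - x) := by
  simpa only [← norm_massEquiv hm, map_sub] using norm_sub_rev _ _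

lemma mnorm_smul (hm : ∀ i, 0 < m i) (c : ℝ) (x : Conf d N) :
    mnorm m (c • x) = |c| * mnorm m x := by
  rw [← norm_massEquiv hm, ← norm_massEquiv hm, map_smul, norm_smul, Real.norm_eq_abs]

lemma mnorm_pos (hm : ∀ i, 0 < m i) {x : Conf d N} (hx : x ≠ 0) : 0 < mnorm m x := by
  rwa [← norm_massEquiv hm, norm_pos_iff, Ne, EmbeddingLike.map_eq_zero_iff]

lemma minner_le (hm : ∀ i, 0 < m i) (x y : Conf d N) :
    minner m x y ≤ mnorm m x * mnorm m y := by
  simpa only [← norm_massEquiv hm, ← inner_massEquiv hm] using real_inner_le_norm _ _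

lemma mnorm_add_smul_sq (hm : ∀ i, 0 < m i) (c : ℝ) (x y : Conf d N) :
    mnorm m (x + c • y) ^ 2 = mnorm m x ^ 2 + 2 * c * minner m x y + c ^ 2 * mnorm m y ^ 2 := by
  simp only [← norm_massEquiv hm, ← inner_massEquiv hm, map_add, map_smul]
  rw [norm_add_sq_real, norm_smul, real_inner_smul_right, mul_pow, Real.norm_eq_abs, sq_abs]
  ring

lemma minner_add_left (m : Fin N → ℝ) (x y z : Conf d N) :
    minner m (x + y) z = minner m x z + minner m y z := by
  simp [minner, inner_add_left, mul_add, Finset.sum_add_distrib]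

lemma minner_neg_left (m : Fin N → ℝ) (x y : Conf d N) : minner m (-x) y = -minner m x y := by
  simp [minner]

lemma minner_sub_left (m : Fin N → ℝ) (x y z : Conf d N) :
    minner m (x - y) z = minner m x z - minner m y z := by
  rw [sub_eq_add_neg, minner_add_left, minner_neg_left, sub_eq_add_neg]

lemma minner_sub_right (m : Fin N → ℝ) (x y z : Conf d N) :
    minner m x (y - z) = minner m x y - minner m x z := by
  simp [minner, inner_sub_right, mul_sub, Finset.sum_sub_distrib]

lemma exists_norm_le_mul_mnorm (hm : ∀ i, 0 < m i) :
    ∃ C > 0, ∀ x : Conf d N, ‖x‖ ≤ C * mnorm m x := by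
  obtain ⟨C, hC, h⟩ := (massEquiv (d := d) hm).symm.toContinuousLinearMap.bound
  exact ⟨C, hC, fun x => by simpa [norm_massEquiv] using h (massEquiv hm x)⟩

lemma continuous_mnorm (hm : ∀ i, 0 < m i) : Continuous (mnorm m : Conf d N → ℝ) := by
  simpa only [norm_massEquiv] using (massEquiv (d := d) hm).continuous.norm

lemma hasBasis_nhds_mnorm (hm : ∀ i, 0 < m i) (x : Conf d N) :
    (𝓝 x).HasBasis (0 < ·) fun ρ => {y | mnorm m (y - x) < ρ} := by
  convert (Metric.nhds_basis_ball (x := massEquiv hm x)).comap (massEquiv hm) using 1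
  · exact (massEquiv hm).toHomeomorph.isInducing.nhds_eq_comap x
  · ext ρ y
    simp [dist_eq_norm, ← map_sub, norm_massEquiv]

/-- Pairing with a fixed configuration as a continuous linear map, to commute it with
integrals. -/
def minnerCLM (hm : ∀ i, 0 < m i) (z : Conf d N) : Conf d N →L[ℝ] ℝ :=
  (innerSL ℝ (massEquiv hm z)).comp (massEquiv hm).toContinuousLinearMap

lemma minnerCLM_apply (hm : ∀ i, 0 < m i) (z u : Conf d N) :
    minnerCLM hm z u = minner m u z := by
  rw [← inner_massEquiv hm, real_inner_comm]
  rfl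

end MassNorm

section ZeroBarycenter

variable {m : Fin N → ℝ} {x y : Conf d N}

lemma inX_zero (m : Fin N → ℝ) : inX m (0 : Conf d N) := by simp [inX]

lemma inX_add (hx : inX m x) (hy : inX m y) : inX m (x + y) := by
  unfold inX at *; simp [smul_add, Finset.sum_add_distrib, hx, hy]

lemma inX_smul (c : ℝ) (hx : inX m x) : inX m (c • x) := by
  unfold inX at *
  simp only [Pi.smul_apply, smul_comm _ c, ← Finset.smul_sum, hx, smul_zero]

lemma inX_sub (hx : inX m x) (hy : inX m y) : inX m (x - y) := by
  unfold inX at *; simp [smul_sub, Finset.sum_sub_distrib, hx, hy]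

lemma isClosed_setX (m : Fin N → ℝ) : IsClosed (setX m : Set (Conf d N)) :=
  isClosed_eq (by fun_prop) continuous_const

end ZeroBarycenter

/-! ### The potential -/

section Potential

variable {m : Fin N → ℝ} {x : Conf d N}

lemma contDiffAt_U (m : Fin N → ℝ) (hx : ¬ collision x) : ContDiffAt ℝ 1 (U m) x := by
  unfold U
  refine ContDiffAt.sum fun i _ => ContDiffAt.sum fun j _ => ?_
  split_ifs with hij
  · have hne : x i - x j ≠ 0 := fun h => hx ⟨i, j, hij.ne, sub_eq_zero.1 h⟩
    have hsub : ContDiffAt ℝ 1 (fun x : Conf d N => x i - x j) x := by fun_prop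
    exact contDiffAt_const.div (hsub.norm ℝ hne) (norm_ne_zero_iff.2 hne)
  · exact contDiffAt_const

lemma isOpen_setOf_not_collision : IsOpen {y : Conf d N | ¬ collision y} := by
  have hpairs : {y : Conf d N | ¬ collision y} = ⋂ i, ⋂ j, ⋂ _ : i ≠ j, {y | y i ≠ y j} := by
    ext y; simp [collision]
  rw [hpairs]
  exact isOpen_iInter_of_finite fun i => isOpen_iInter_of_finite fun j =>
    isOpen_iInter_of_finite fun _ => isOpen_ne_fun (continuous_apply i) (continuous_apply j)

lemma exists_lipschitz_U (hm : ∀ i, 0 < m i) (hx : ¬ collision x) :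
    ∃ ρ > 0, ∃ C, 0 ≤ C ∧ (∀ y, mnorm m (y - x) < ρ → ¬ collision y) ∧
      ∀ y z, mnorm m (y - x) < ρ → mnorm m (z - x) < ρ →
        U m y - U m z ≤ C * mnorm m (y - z) := by
  obtain ⟨K, s, hs, hK⟩ := (contDiffAt_U m hx).exists_lipschitzOnWith
  obtain ⟨c, hc, hle⟩ := exists_norm_le_mul_mnorm (d := d) hm
  obtain ⟨ρ, hρ, hball⟩ := (hasBasis_nhds_mnorm hm x).mem_iff.1
    (inter_mem hs (isOpen_setOf_not_collision.mem_nhds hx))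
  refine ⟨ρ, hρ, K * c, by positivity, fun y hy => (hball hy).2, fun y z hy hz => ?_⟩
  calc U m y - U m z ≤ dist (U m y) (U m z) := le_abs_self _
    _ ≤ K * dist y z := hK.dist_le_mul _ (hball hy).1 _ (hball hz).1
    _ ≤ K * (c * mnorm m (y - z)) := by rw [dist_eq_norm]; gcongr; exact hle _
    _ = K * c * mnorm m (y - z) := by ring

lemma tendsto_U_atTop_of_collision (hm : ∀ i, 0 < m i) (hx : collision x) :
    Tendsto (U m) (𝓝[{y | ¬ collision y}] x) atTop := by
  obtain ⟨i, j, hij, hxij⟩ : ∃ i j, i < j ∧ x i = x j := by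
    obtain ⟨i, j, hne, h⟩ := hx
    rcases hne.lt_or_gt with hlt | hlt
    exacts [⟨i, j, hlt, h⟩, ⟨j, i, hlt, h.symm⟩]
  have hdist : Tendsto (fun y : Conf d N => ‖y i - y j‖) (𝓝[{y | ¬ collision y}] x) (𝓝[>] 0) := by
    refine tendsto_nhdsWithin_iff.2 ⟨?_, ?_⟩
    · have hcont : Continuous fun y : Conf d N => ‖y i - y j‖ := by fun_prop
      simpa [hxij] using (hcont.tendsto x).mono_left nhdsWithin_le_nhds
    · filter_upwards [self_mem_nhdsWithin] with y hy
      exact norm_pos_iff.2 fun h => hy ⟨i, j, hij.ne, sub_eq_zero.1 h⟩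
  have hterm (y : Conf d N) (k l : Fin N) :
      0 ≤ if k < l then m k * m l / ‖y k - y l‖ else 0 := by
    have := (hm k).le; have := (hm l).le
    split_ifs <;> positivity
  refine tendsto_atTop_mono (fun y => ?_)
    (hdist.inv_tendsto_nhdsGT_zero.const_mul_atTop (mul_pos (hm i) (hm j)))
  calc m i * m j * ‖y i - y j‖⁻¹
      = if i < j then m i * m j / ‖y i - y j‖ else 0 := by rw [if_pos hij, div_eq_mul_inv]
    _ ≤ ∑ l, if i < l then m i * m l / ‖y i - y l‖ else 0 :=
      Finset.single_le_sum (fun l _ => hterm y i l) (Finset.mem_univ j)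
    _ ≤ U m y := Finset.single_le_sum
      (f := fun k => ∑ l, if k < l then m k * m l / ‖y k - y l‖ else 0)
      (fun k _ => Finset.sum_nonneg fun l _ => hterm y k l) (Finset.mem_univ i)

/-- Holds for `v + q = 0` too, where the left inverse has the junk value `0`. -/
lemma neg_norm_div_sq_le_inv_sub_inv {E : Type*} [SeminormedAddCommGroup E] {v : E}
    (hv : ‖v‖ ≠ 0) (q : E) : -(‖q‖ / ‖v‖ ^ 2) ≤ ‖v + q‖⁻¹ - ‖v‖⁻¹ := by
  have hv0 : 0 < ‖v‖ := (norm_nonneg v).lt_of_ne' hv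
  rcases (norm_nonneg (v + q)).eq_or_lt with h | h
  · have hq : ‖v‖ ≤ ‖q‖ := by simpa [← h] using norm_le_add_norm_add v q
    rw [← h, inv_zero, zero_sub, neg_le_neg_iff, le_div_iff₀ (by positivity)]
    field_simp
    exact hq
  · have htri : ‖v + q‖ ≤ ‖v‖ + ‖q‖ := norm_add_le v q
    rw [← sub_nonneg]
    field_simp
    rcases le_total ‖v‖ ‖q‖ with hvq | hvq
    · nlinarith [mul_nonneg h.le (sub_nonneg.2 hvq)]
    · nlinarith [mul_le_mul_of_nonneg_right htri (sub_nonneg.2 hvq), sq_nonneg ‖q‖]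

lemma exists_U_smul_add_lower_bound (hm : ∀ i, 0 < m i) {a : Conf d N} (ha : ¬ collision a) :
    ∃ C, 0 ≤ C ∧ ∀ (q : Conf d N) (t : ℝ), 0 < t →
      -(C * mnorm m q / t ^ 2) ≤ U m (t • a + q) - U m (t • a) := by
  obtain ⟨c, hc, hle⟩ := exists_norm_le_mul_mnorm (d := d) hm
  let k (i j : Fin N) : ℝ := if i < j then m i * m j * (2 * c / ‖a i - a j‖ ^ 2) else 0
  have hk (i j : Fin N) : 0 ≤ k i j := by
    have := (hm i).le; have := (hm j).le
    simp only [k]; split_ifs <;> positivity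
  refine ⟨∑ i, ∑ j, k i j, Finset.sum_nonneg fun i _ => Finset.sum_nonneg fun j _ => hk i j,
    fun q t ht => ?_⟩
  simp only [U, Finset.sum_mul, Finset.sum_div, ← Finset.sum_neg_distrib,
    ← Finset.sum_sub_distrib]
  refine Finset.sum_le_sum fun i _ => Finset.sum_le_sum fun j _ => ?_
  simp only [k]
  split_ifs with hij
  · set v := (t • a) i - (t • a) j
    have hv : ‖v‖ = t * ‖a i - a j‖ := by
      rw [← Real.norm_of_nonneg ht.le, ← norm_smul, smul_sub]; rfl
    have hα : ‖a i - a j‖ ≠ 0 := norm_ne_zero_iff.2 fun h => ha ⟨i, j, hij.ne, sub_eq_zero.1 h⟩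
    have hq : ‖q i - q j‖ ≤ 2 * c * mnorm m q := by
      linarith [norm_sub_le (q i) (q j), norm_le_pi_norm q i, norm_le_pi_norm q j, hle q]
    have hvq : (t • a + q) i - (t • a + q) j = v + (q i - q j) := add_sub_add_comm _ _ _ _
    calc -(m i * m j * (2 * c / ‖a i - a j‖ ^ 2) * mnorm m q / t ^ 2)
        = m i * m j * -(2 * c * mnorm m q / ‖v‖ ^ 2) := by rw [hv]; field_simp
      _ ≤ m i * m j * (‖v + (q i - q j)‖⁻¹ - ‖v‖⁻¹) := by
        refine mul_le_mul_of_nonneg_left (le_trans ?_ (neg_norm_div_sq_le_inv_sub_inv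
          (hv ▸ mul_ne_zero ht.ne' hα) (q i - q j))) (mul_pos (hm i) (hm j)).le
        gcongr
      _ = _ := by rw [hvq]; ring
  · simp

end Potential

/-! ### Curves of finite energy -/

/-- The squared norm `‖φ‖²_{D_∞} = ∫_1^∞ ‖φ̇‖_M²`. -/
def energy (m : Fin N → ℝ) (φ' : ℝ → Conf d N) : ℝ := ∫ t in Ioi (1 : ℝ), mnorm m (φ' t) ^ 2

lemma energy_nonneg (m : Fin N → ℝ) (φ' : ℝ → Conf d N) : 0 ≤ energy m φ' :=
  integral_nonneg fun _ => sq_nonneg _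

lemma timeSet_top (t0 : ℝ) : timeSet t0 ⊤ = Ioi t0 := by
  ext t; simp [timeSet, EReal.coe_lt_top]

lemma restrict_Ioi_restrict_Ioc (t : ℝ) :
    (volume.restrict (Ioi (1 : ℝ))).restrict (Ioc 1 t) = volume.restrict (Ioc 1 t) := by
  rw [Measure.restrict_restrict measurableSet_Ioc, inter_eq_self_of_subset_left Ioc_subset_Ioi_self]

lemma restrict_Ioi_apply_Ioc (t : ℝ) :
    volume.restrict (Ioi (1 : ℝ)) (Ioc 1 t) = ENNReal.ofReal (t - 1) := by
  rw [Measure.restrict_apply measurableSet_Ioc, inter_eq_self_of_subset_left Ioc_subset_Ioi_self,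
    Real.volume_Ioc]

lemma restrict_Ioi_apply_Ioc_ne_top (t : ℝ) : volume.restrict (Ioi (1 : ℝ)) (Ioc 1 t) ≠ ∞ := by
  rw [restrict_Ioi_apply_Ioc]; exact ENNReal.ofReal_ne_top

namespace InD

variable {m : Fin N → ℝ} {φ φ' : ℝ → Conf d N} {t : ℝ}

lemma inX (h : InD m 1 ⊤ φ φ') (ht : 1 ≤ t) : inX m (φ t) := h.2.1 t ht (EReal.coe_lt_top t)

lemma eq_integral (h : InD m 1 ⊤ φ φ') (ht : 1 ≤ t) : φ t = ∫ s in Ioc 1 t, φ' s :=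
  h.2.2.1 t ht (EReal.coe_lt_top t)

lemma integrableOn (h : InD m 1 ⊤ φ φ') (t : ℝ) : IntegrableOn φ' (Ioc 1 t) := by
  rcases le_or_gt 1 t with ht | ht
  · exact h.2.2.2.1 t ht (EReal.coe_lt_top t)
  · simp [Ioc_eq_empty_of_le ht.le]

lemma integrable_sq (h : InD m 1 ⊤ φ φ') :
    IntegrableOn (fun t => mnorm m (φ' t) ^ 2) (Ioi 1) := by
  simpa only [timeSet_top] using h.2.2.2.2

lemma aestronglyMeasurable (h : InD m 1 ⊤ φ φ') :
    AEStronglyMeasurable φ' (volume.restrict (Ioi 1)) := by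
  have hUnion : Ioi (1 : ℝ) = ⋃ n : ℕ, Ioc 1 (n : ℝ) := by
    ext t
    simp only [mem_Ioi, mem_iUnion, mem_Ioc, exists_and_left]
    exact ⟨fun ht => ⟨ht, exists_nat_ge t⟩, fun ht => ht.1⟩
  rw [hUnion]
  exact AEStronglyMeasurable.iUnion fun n => (h.integrableOn n).aestronglyMeasurable

lemma continuousOn_Icc (h : InD m 1 ⊤ φ φ') (T : ℝ) : ContinuousOn φ (Icc 1 T) :=
  (intervalIntegral.continuousOn_primitive
    ((integrableOn_Icc_iff_integrableOn_Ioc).2 (h.integrableOn T))).congr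
      fun _ hs => h.eq_integral hs.1

lemma memLp (hm : ∀ i, 0 < m i) (h : InD m 1 ⊤ φ φ') :
    MemLp (fun t => massEquiv hm (φ' t)) 2 (volume.restrict (Ioi 1)) := by
  rw [memLp_two_iff_integrable_sq_norm
    ((massEquiv hm).continuous.comp_aestronglyMeasurable h.aestronglyMeasurable)]
  simpa only [norm_massEquiv, IntegrableOn] using h.integrable_sq

/-- The velocity, rescaled by the masses, as an element of a Hilbert space. -/
def toLp (hm : ∀ i, 0 < m i) (h : InD m 1 ⊤ φ φ') :
    Lp (MassSpace d N) 2 (volume.restrict (Ioi (1 : ℝ))) :=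
  (h.memLp hm).toLp _

lemma norm_toLp_sq (hm : ∀ i, 0 < m i) (h : InD m 1 ⊤ φ φ') : ‖h.toLp hm‖ ^ 2 = energy m φ' := by
  rw [← real_inner_self_eq_norm_sq, L2.inner_def, energy]
  refine integral_congr_ae ((h.memLp hm).coeFn_toLp.mono fun t ht => ?_)
  simp only [toLp, ht, real_inner_self_eq_norm_sq, norm_massEquiv]

lemma massEquiv_eq_setIntegral (hm : ∀ i, 0 < m i) (h : InD m 1 ⊤ φ φ') (ht : 1 ≤ t) :
    massEquiv hm (φ t) = ∫ s in Ioc 1 t, h.toLp hm s ∂volume.restrict (Ioi 1) := by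
  rw [h.eq_integral ht, ← ContinuousLinearEquiv.integral_comp_comm, ← restrict_Ioi_restrict_Ioc]
  exact integral_congr_ae (ae_restrict_of_ae ((h.memLp hm).coeFn_toLp.mono fun s hs => hs.symm))

lemma mnorm_le (hm : ∀ i, 0 < m i) (h : InD m 1 ⊤ φ φ') (ht : 1 ≤ t) :
    mnorm m (φ t) ≤ √(t - 1) * √(energy m φ') := by
  rw [← norm_massEquiv hm, h.massEquiv_eq_setIntegral hm ht, ← h.norm_toLp_sq hm,
    Real.sqrt_sq (norm_nonneg _)]
  simpa only [Measure.real, restrict_Ioi_apply_Ioc, ENNReal.toReal_ofReal (sub_nonneg.2 ht)] using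
    norm_setIntegral_le_sqrt_mul_norm measurableSet_Ioc (restrict_Ioi_apply_Ioc_ne_top t) _

lemma zero (m : Fin N → ℝ) : InD m 1 ⊤ (fun _ => (0 : Conf d N)) (fun _ => 0) :=
  ⟨rfl, fun _ _ _ => inX_zero m, fun _ _ _ => by simp, fun _ _ _ => integrableOn_zero, by simp⟩

end InD

section Primitive

variable {m : Fin N → ℝ} (hm : ∀ i, 0 < m i)

/-- The curve starting at `0` whose velocity, rescaled by the masses, is `g`. -/
def primitive (g : Lp (MassSpace d N) 2 (volume.restrict (Ioi (1 : ℝ)))) (t : ℝ) : Conf d N :=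
  (massEquiv hm).symm (∫ s in Ioc 1 t, g s ∂volume.restrict (Ioi 1))

variable {g : Lp (MassSpace d N) 2 (volume.restrict (Ioi (1 : ℝ)))}

lemma norm_sq_eq_energy : ‖g‖ ^ 2 = energy m fun t => (massEquiv hm).symm (g t) := by
  simp only [← real_inner_self_eq_norm_sq g, L2.inner_def, energy, ← norm_massEquiv hm,
    ContinuousLinearEquiv.apply_symm_apply, real_inner_self_eq_norm_sq]

lemma inD_primitive (hX : ∀ t, 1 ≤ t → inX m (primitive hm g t)) :
    InD m 1 ⊤ (primitive hm g) fun t => (massEquiv hm).symm (g t) := by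
  refine ⟨by simp [primitive], fun t ht _ => hX t ht, fun t _ _ => ?_, fun t _ _ => ?_, ?_⟩
  · rw [primitive, restrict_Ioi_restrict_Ioc, ContinuousLinearEquiv.integral_comp_comm]
  · have hfin : IsFiniteMeasure (volume.restrict (Ioc 1 t)) :=
      isFiniteMeasure_restrict.2 measure_Ioc_lt_top.ne
    have hg : Integrable g (volume.restrict (Ioc 1 t)) :=
      ((Lp.memLp g).mono_measure (Measure.restrict_mono Ioc_subset_Ioi_self le_rfl)).integrable
        one_le_two
    exact (massEquiv hm).symm.toContinuousLinearMap.integrable_comp hg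
  · rw [timeSet_top]
    simpa only [← norm_massEquiv hm, ContinuousLinearEquiv.apply_symm_apply, IntegrableOn]
      using (memLp_two_iff_integrable_sq_norm (Lp.memLp g).1).1 (Lp.memLp g)

end Primitive

lemma exists_limit_curve {m : Fin N → ℝ} (hm : ∀ i, 0 < m i) {φ φ' : ℕ → ℝ → Conf d N}
    (hφ : ∀ n, InD m 1 ⊤ (φ n) (φ' n)) {K : ℝ} (hK : ∀ n, energy m (φ' n) ≤ K) :
    ∃ ψ ψ' : ℝ → Conf d N, ∃ σ : ℕ → ℕ, ∃ E : ℝ, StrictMono σ ∧ InD m 1 ⊤ ψ ψ' ∧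
      (∀ t ≥ 1, Tendsto (fun n => φ (σ n) t) atTop (𝓝 (ψ t))) ∧
      Tendsto (fun n => energy m (φ' (σ n))) atTop (𝓝 E) ∧ energy m ψ' ≤ E := by
  obtain ⟨E, -, σ₁, hσ₁, hE⟩ := tendsto_subseq_of_bounded (x := fun n => energy m (φ' n))
    (Metric.isBounded_Icc 0 K) fun n => ⟨energy_nonneg _ _, hK n⟩
  have : Fact ((2 : ℝ≥0∞) ≠ ∞) := ⟨ENNReal.ofNat_ne_top⟩
  obtain ⟨g, σ₂, hσ₂, hg⟩ := exists_subseq_tendsto_inner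
    (f := fun n => (hφ (σ₁ n)).toLp hm) (K := √K) fun n =>
      Real.le_sqrt_of_sq_le (((hφ _).norm_toLp_sq hm).trans_le (hK _))
  have hEσ : Tendsto (fun n => energy m (φ' (σ₁ (σ₂ n)))) atTop (𝓝 E) :=
    hE.comp hσ₂.tendsto_atTop
  have hlim : ∀ t ≥ 1, Tendsto (fun n => φ (σ₁ (σ₂ n)) t) atTop (𝓝 (primitive hm g t)) := by
    intro t ht
    have hint := tendsto_setIntegral_of_tendsto_inner measurableSet_Ioc
      (restrict_Ioi_apply_Ioc_ne_top t) hg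
    simp only [← (hφ _).massEquiv_eq_setIntegral hm ht] at hint
    simpa [Function.comp_def, primitive] using
      ((massEquiv hm).symm.continuous.tendsto _).comp hint
  refine ⟨primitive hm g, _, σ₁ ∘ σ₂, E, hσ₁.comp hσ₂, inD_primitive hm fun t ht => ?_, hlim,
    hEσ, ?_⟩
  · exact (isClosed_setX m).mem_of_tendsto (hlim t ht)
      (Eventually.of_forall fun n => (hφ _).inX ht)
  · rw [← norm_sq_eq_energy hm]
    exact norm_sq_le_of_tendsto_inner (hg g) (by simpa only [InD.norm_toLp_sq] using hEσ)

/-! ### The renormalized action -/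

/-- The potential part `U(γ(t)) − U(a t)` of the renormalized Lagrangian along the motion `γ`
associated with `φ`. -/
def renormPotential (m : Fin N → ℝ) (a x : Conf d N) (φ : ℝ → Conf d N) (t : ℝ) : ℝ :=
  U m (hypCurve a x φ t) - U m (t • a)

/-- The real number to which `hypAction` evaluates on the curves of finite action. -/
def realAction (m : Fin N → ℝ) (a x : Conf d N) (φ φ' : ℝ → Conf d N) : ℝ :=
  energy m φ' / 2 + ∫ t in Ioi (1 : ℝ), renormPotential m a x φ t

/-- The curves of `D₀^{1,2}(1,+∞)` whose renormalized action is not `+∞`. -/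
structure FiniteAction (m : Fin N → ℝ) (a x : Conf d N) (φ φ' : ℝ → Conf d N) : Prop where
  inD : InD m 1 ⊤ φ φ'
  ae_not_collision : ∀ᵐ t ∂volume.restrict (Ioi 1), ¬ collision (hypCurve a x φ t)
  integrableOn : IntegrableOn (renormPotential m a x φ) (Ioi 1)

/-- The minimum of the renormalized action as a real number, junk if no curve has finite
action. -/
def minAction (m : Fin N → ℝ) (a x : Conf d N) : ℝ := (hypInf m a x ⊤).toReal

section Action

variable {m : Fin N → ℝ} {a x : Conf d N} {φ φ' : ℝ → Conf d N}

lemma hypCurve_eq_smul_add (a x : Conf d N) (φ : ℝ → Conf d N) (t : ℝ) :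
    hypCurve a x φ t = t • a + (φ t + (x - a)) := by
  unfold hypCurve; abel

lemma hypIntegrand_eq (m : Fin N → ℝ) (a x : Conf d N) (φ φ' : ℝ → Conf d N) :
    hypIntegrand m a x φ φ' = fun t => mnorm m (φ' t) ^ 2 / 2 + renormPotential m a x φ t :=
  funext fun _ => add_sub_assoc _ _ _

lemma FiniteAction.hypAction_eq (h : FiniteAction m a x φ φ') :
    hypAction m a x ⊤ φ φ' = realAction m a x φ φ' := by
  have hsq := h.inD.integrable_sq.div_const 2
  rw [hypAction, timeSet_top, hypIntegrand_eq, if_pos ⟨hsq.add h.integrableOn, h.ae_not_collision⟩,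
    integral_add hsq h.integrableOn, integral_div, realAction, energy]

lemma InD.finiteAction (h : InD m 1 ⊤ φ φ') (htop : hypAction m a x ⊤ φ φ' ≠ ⊤) :
    FiniteAction m a x φ φ' := by
  unfold hypAction at htop
  rw [timeSet_top, hypIntegrand_eq] at htop
  obtain ⟨hint, hcol⟩ := of_not_not fun h => htop (if_neg h)
  refine ⟨h, hcol, (hint.sub (h.integrable_sq.div_const 2)).congr (ae_of_all _ fun t => ?_)⟩
  exact add_sub_cancel_left _ _

lemma hypInf_le (a x : Conf d N) (h : InD m 1 ⊤ φ φ') :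
    hypInf m a x ⊤ ≤ hypAction m a x ⊤ φ φ' :=
  iInf_le_of_le φ (iInf_le_of_le φ' (iInf_le _ h))

lemma sqrt_div_sq_eq_rpow {t : ℝ} (ht : 0 < t) : √t / t ^ 2 = t ^ (-(3 / 2) : ℝ) := by
  rw [Real.sqrt_eq_rpow, ← Real.rpow_natCast t 2, ← Real.rpow_sub ht]
  norm_num

/-- The decay `t^(-3/2)` comes from `‖φ(t)‖_M = O(√t)` and `∇U(a t) = O(t⁻²)`. -/
lemma exists_renormPotential_lower_bound (hm : ∀ i, 0 < m i) (ha : ¬ collision a) :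
    ∃ C, 0 ≤ C ∧ ∀ (y : Conf d N) (φ φ' : ℝ → Conf d N), InD m 1 ⊤ φ φ' → ∀ t ≥ 1,
      -(C * (√(energy m φ') + mnorm m (y - a)) * t ^ (-(3 / 2) : ℝ)) ≤
        renormPotential m a y φ t := by
  obtain ⟨C, hC, hU⟩ := exists_U_smul_add_lower_bound hm ha
  refine ⟨C, hC, fun y φ φ' hφ t ht => ?_⟩
  have ht0 : 0 < t := one_pos.trans_le ht
  have hq : mnorm m (φ t + (y - a)) ≤ (√(energy m φ') + mnorm m (y - a)) * √t := calc
    mnorm m (φ t + (y - a)) ≤ √(t - 1) * √(energy m φ') + mnorm m (y - a) :=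
      (mnorm_add_le hm _ _).trans (add_le_add_left (hφ.mnorm_le hm ht) _)
    _ ≤ √t * √(energy m φ') + √t * mnorm m (y - a) := by
      gcongr
      · linarith
      · exact le_mul_of_one_le_left (mnorm_nonneg _ _) (Real.one_le_sqrt.2 ht)
    _ = (√(energy m φ') + mnorm m (y - a)) * √t := by ring
  rw [renormPotential, hypCurve_eq_smul_add]
  refine le_trans (neg_le_neg ?_) (hU (φ t + (y - a)) t ht0)
  rw [← sqrt_div_sq_eq_rpow ht0, mul_assoc, ← mul_div_assoc, ← mul_div_assoc]
  gcongr

lemma exists_energy_le (hm : ∀ i, 0 < m i) (ha : ¬ collision a) (b : ℝ) :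
    ∃ C, ∀ y : Conf d N, mnorm m (y - a) ≤ b → ∀ φ φ' : ℝ → Conf d N,
      FiniteAction m a y φ φ' → energy m φ' ≤ 4 * realAction m a y φ φ' + C := by
  obtain ⟨C, hC, hlow⟩ := exists_renormPotential_lower_bound hm ha
  refine ⟨8 * C * b + 16 * C ^ 2, fun y hy φ φ' hφ => ?_⟩
  have hpot : -(C * (√(energy m φ') + mnorm m (y - a)) * 2) ≤
      ∫ t in Ioi (1 : ℝ), renormPotential m a y φ t := by
    have hint : ∫ t in Ioi (1 : ℝ), t ^ (-(3 / 2) : ℝ) = 2 := by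
      rw [integral_Ioi_rpow_of_lt (by norm_num) one_pos]; norm_num
    rw [← hint, ← integral_const_mul, ← integral_neg]
    exact setIntegral_mono_on
      ((integrableOn_Ioi_rpow_of_lt (by norm_num) one_pos).const_mul _).neg hφ.integrableOn
      measurableSet_Ioi fun t ht => hlow y φ φ' hφ.inD t (le_of_lt ht)
  have hsqrt := Real.sq_sqrt (energy_nonneg m φ')
  have hCy := mul_le_mul_of_nonneg_left hy hC
  unfold realAction
  nlinarith [sq_nonneg (√(energy m φ') - 4 * C)]

lemma FiniteAction.coe_minAction (hm : ∀ i, 0 < m i) (ha : ¬ collision a)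
    (hφ : FiniteAction m a x φ φ') : (minAction m a x : EReal) = hypInf m a x ⊤ := by
  obtain ⟨C, hC⟩ := exists_energy_le hm ha (mnorm m (x - a))
  have hbelow : ((-C / 4 : ℝ) : EReal) ≤ hypInf m a x ⊤ := by
    refine le_iInf fun ψ => le_iInf fun ψ' => le_iInf fun hψ => ?_
    by_cases htop : hypAction m a x ⊤ ψ ψ' = ⊤
    · rw [htop]; exact le_top
    · have hψA := hψ.finiteAction htop
      rw [hψA.hypAction_eq, EReal.coe_le_coe_iff]
      linarith [hC x le_rfl ψ ψ' hψA, energy_nonneg m ψ']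
  have habove := hypInf_le a x hφ.inD
  rw [hφ.hypAction_eq] at habove
  exact EReal.coe_toReal (ne_top_of_le_ne_top (EReal.coe_ne_top _) habove)
    (ne_bot_of_le_ne_bot (EReal.coe_ne_bot _) hbelow)

lemma FiniteAction.minAction_le (hm : ∀ i, 0 < m i) (ha : ¬ collision a)
    (hφ : FiniteAction m a x φ φ') : minAction m a x ≤ realAction m a x φ φ' := by
  rw [← EReal.coe_le_coe_iff, hφ.coe_minAction hm ha, ← hφ.hypAction_eq]
  exact hypInf_le a x hφ.inD

lemma FiniteAction.realAction_eq_minAction (hφ : FiniteAction m a x φ φ')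
    (hmin : hypAction m a x ⊤ φ φ' = hypInf m a x ⊤) :
    realAction m a x φ φ' = minAction m a x := by
  rw [minAction, ← hmin, hφ.hypAction_eq, EReal.toReal_coe]

lemma FiniteAction.exists_realAction_lt (hm : ∀ i, 0 < m i) (ha : ¬ collision a)
    (hφ : FiniteAction m a x φ φ') {c : ℝ} (hc : minAction m a x < c) :
    ∃ ψ ψ' : ℝ → Conf d N, FiniteAction m a x ψ ψ' ∧ realAction m a x ψ ψ' < c := by
  rw [← EReal.coe_lt_coe_iff, hφ.coe_minAction hm ha] at hc
  simp only [hypInf, iInf_lt_iff] at hc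
  obtain ⟨ψ, ψ', hψ, hlt⟩ := hc
  have hψA := hψ.finiteAction hlt.ne_top
  rw [hψA.hypAction_eq, EReal.coe_lt_coe_iff] at hlt
  exact ⟨ψ, ψ', hψA, hlt⟩

end Action

/-! ### Compactness of curves of bounded action -/

section Compactness

variable {m : Fin N → ℝ} {a x : Conf d N}

lemma tendsto_hypCurve {y : ℕ → Conf d N} {φ : ℕ → ℝ → Conf d N} {ψ : ℝ → Conf d N} {t : ℝ}
    (hy : Tendsto y atTop (𝓝 x)) (hφ : Tendsto (fun n => φ n t) atTop (𝓝 (ψ t))) :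
    Tendsto (fun n => hypCurve a (y n) (φ n) t) atTop (𝓝 (hypCurve a x ψ t)) :=
  ((hφ.add_const _).add hy).sub_const _

lemma finiteAction_and_realAction_le_of_tendsto (hm : ∀ i, 0 < m i) (ha : ¬ collision a)
    {y : ℕ → Conf d N} {φ φ' : ℕ → ℝ → Conf d N} {ψ ψ' : ℝ → Conf d N} {c : ℕ → ℝ} {p E : ℝ}
    (hφ : ∀ n, FiniteAction m a (y n) (φ n) (φ' n)) (hψ : InD m 1 ⊤ ψ ψ')
    (hy : Tendsto y atTop (𝓝 x)) (hlim : ∀ t ≥ 1, Tendsto (fun n => φ n t) atTop (𝓝 (ψ t)))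
    (hc : Tendsto c atTop (𝓝 p)) (hφc : ∀ n, realAction m a (y n) (φ n) (φ' n) ≤ c n)
    (hE : Tendsto (fun n => energy m (φ' n)) atTop (𝓝 E)) (hψE : energy m ψ' ≤ E) :
    FiniteAction m a x ψ ψ' ∧ realAction m a x ψ ψ' ≤ p := by
  obtain ⟨C, -, hlow⟩ := exists_renormPotential_lower_bound hm ha
  obtain ⟨B, hB⟩ := ((hE.sqrt.add (((continuous_mnorm hm).tendsto _).comp
    (hy.sub_const a))).const_mul C).bddAbove_range
  have hg : Integrable (fun t : ℝ => -(B * t ^ (-(3 / 2) : ℝ))) (volume.restrict (Ioi 1)) :=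
    ((integrableOn_Ioi_rpow_of_lt (by norm_num) one_pos).const_mul _).neg
  have hgF (n : ℕ) : (fun t : ℝ => -(B * t ^ (-(3 / 2) : ℝ))) ≤ᵐ[volume.restrict (Ioi 1)]
      renormPotential m a (y n) (φ n) := by
    filter_upwards [ae_restrict_mem measurableSet_Ioi] with t (ht : 1 < t)
    refine le_trans (neg_le_neg ?_) (hlow (y n) (φ n) (φ' n) (hφ n).inD t ht.le)
    exact mul_le_mul_of_nonneg_right (hB (mem_range_self n))
      (Real.rpow_nonneg (one_pos.trans ht).le _)
  have hFc (n : ℕ) : ∫ t in Ioi (1 : ℝ), renormPotential m a (y n) (φ n) t ≤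
      c n - energy m (φ' n) / 2 := by
    have := hφc n
    unfold realAction at this
    linarith
  have hcE : Tendsto (fun n => c n - energy m (φ' n) / 2) atTop (𝓝 (p - E / 2)) :=
    hc.sub (hE.div_const 2)
  have hcol : ∀ᵐ t ∂volume.restrict (Ioi (1 : ℝ)), ¬ collision (hypCurve a x ψ t) := by
    refine ae_not_of_tendsto_atTop (fun n => (hφ n).integrableOn) hg hgF hFc hcE ?_
    filter_upwards [ae_restrict_mem measurableSet_Ioi,
      ae_all_iff.2 fun n => (hφ n).ae_not_collision] with t (ht : 1 < t) hnot hbad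
    exact tendsto_atTop_add_const_right _ _ ((tendsto_U_atTop_of_collision hm hbad).comp
      (tendsto_nhdsWithin_iff.2 ⟨tendsto_hypCurve hy (hlim t ht.le), .of_forall hnot⟩))
  obtain ⟨hint, hle⟩ := integrable_and_integral_le_of_tendsto
    (f := renormPotential m a x ψ) (fun n => (hφ n).integrableOn) hg hgF hFc hcE (by
      filter_upwards [ae_restrict_mem measurableSet_Ioi, hcol] with t (ht : 1 < t) hnot
      exact ((contDiffAt_U m hnot).continuousAt.tendsto.comp
        (tendsto_hypCurve hy (hlim t ht.le))).sub_const _)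
  refine ⟨⟨hψ, hcol, hint⟩, ?_⟩
  unfold realAction
  linarith

lemma exists_limit_finiteAction (hm : ∀ i, 0 < m i) (ha : ¬ collision a)
    {y : ℕ → Conf d N} {φ φ' : ℕ → ℝ → Conf d N} {c : ℕ → ℝ} {p : ℝ}
    (hφ : ∀ n, FiniteAction m a (y n) (φ n) (φ' n)) (hy : Tendsto y atTop (𝓝 x))
    (hc : Tendsto c atTop (𝓝 p)) (hφc : ∀ n, realAction m a (y n) (φ n) (φ' n) ≤ c n) :
    ∃ ψ ψ' : ℝ → Conf d N, ∃ σ : ℕ → ℕ, StrictMono σ ∧ FiniteAction m a x ψ ψ' ∧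
      realAction m a x ψ ψ' ≤ p ∧ ∀ t ≥ 1, Tendsto (fun n => φ (σ n) t) atTop (𝓝 (ψ t)) := by
  obtain ⟨b, hb⟩ := (((continuous_mnorm hm).tendsto _).comp (hy.sub_const a)).bddAbove_range
  obtain ⟨P, hP⟩ := hc.bddAbove_range
  obtain ⟨C, hC⟩ := exists_energy_le hm ha b
  obtain ⟨ψ, ψ', σ, E, hσ, hψ, hlim, hE, hψE⟩ := exists_limit_curve hm (K := 4 * P + C)
    (fun n => (hφ n).inD) fun n => by
      linarith [hC (y n) (hb (mem_range_self n)) _ _ (hφ n), hφc n, hP (mem_range_self n)]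
  have hσt := hσ.tendsto_atTop
  obtain ⟨hψA, hle⟩ := finiteAction_and_realAction_le_of_tendsto hm ha (fun n => hφ (σ n)) hψ
    (hy.comp hσt) hlim (hc.comp hσt) (fun n => hφc (σ n)) hE hψE
  exact ⟨ψ, ψ', σ, hσ, hψA, hle, hlim⟩

/-- Compactness turns uniqueness of the minimizer at `x` into stability of almost minimizers,
the initial configuration being allowed to vary as well. -/
lemma eventually_mnorm_sub_lt_of_unique (hm : ∀ i, 0 < m i) (ha : ¬ collision a)
    {φ : ℝ → Conf d N}
    (huniq : ∀ ψ ψ' : ℝ → Conf d N, InD m 1 ⊤ ψ ψ' →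
      hypAction m a x ⊤ ψ ψ' = hypInf m a x ⊤ → ∀ t : ℝ, 1 ≤ t → ψ t = φ t)
    {t : ℝ} (ht : 1 ≤ t) {η : ℝ} (hη : 0 < η) :
    ∀ᶠ p in 𝓝 (x, minAction m a x), ∀ χ χ' : ℝ → Conf d N, FiniteAction m a p.1 χ χ' →
      realAction m a p.1 χ χ' ≤ p.2 → mnorm m (χ t - φ t) < η := by
  by_contra hcon
  obtain ⟨p, hp, hfar⟩ := exists_seq_forall_of_frequently (not_eventually.1 hcon)
  push Not at hfar
  choose χ χ' hχ hχp hχη using hfar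
  obtain ⟨ψ, ψ', σ, -, hψ, hle, hlim⟩ := exists_limit_finiteAction hm ha hχ
    ((continuous_fst.tendsto _).comp hp) ((continuous_snd.tendsto _).comp hp) hχp
  have hψmin : hypAction m a x ⊤ ψ ψ' = hypInf m a x ⊤ := by
    rw [hψ.hypAction_eq, ← hψ.coe_minAction hm ha, EReal.coe_eq_coe_iff]
    exact le_antisymm hle (hψ.minAction_le hm ha)
  have hdist : Tendsto (fun n => mnorm m (χ (σ n) t - φ t)) atTop (𝓝 0) := by
    simpa [huniq ψ ψ' hψ.inD hψmin t ht, Function.comp_def] using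
      ((continuous_mnorm hm).tendsto _).comp ((hlim t ht).sub_const (φ t))
  exact absurd (ge_of_tendsto' hdist fun n => hχη (σ n)) hη.not_ge

end Compactness

/-! ### Moving the initial configuration -/

/-- The piecewise affine cutoff which rises from `0` to `1` over `[1, 1 + δ]`. -/
def ramp (δ t : ℝ) : ℝ := min ((t - 1) / δ) 1

/-- The curve `φ` with the displacement `z` switched on linearly over `[1, 1 + δ]`. With
`z = y - y'` the motion from `y'` that it defines joins the motion from `y` that `φ` defines at
time `1 + δ`. -/
def shiftCurve (δ : ℝ) (z : Conf d N) (φ : ℝ → Conf d N) (t : ℝ) : Conf d N :=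
  φ t + ramp δ t • z

/-- The velocity of `shiftCurve`. -/
def shiftDeriv (δ : ℝ) (z : Conf d N) (φ' : ℝ → Conf d N) (t : ℝ) : Conf d N :=
  φ' t + (Ioc 1 (1 + δ)).indicator (fun _ => δ⁻¹) t • z

section Shift

variable {m : Fin N → ℝ} {a x y y' z : Conf d N} {φ φ' : ℝ → Conf d N} {δ t : ℝ}

lemma ramp_mem_Icc (hδ : 0 < δ) (ht : 1 ≤ t) : ramp δ t ∈ Icc 0 1 :=
  ⟨le_min (div_nonneg (sub_nonneg.2 ht) hδ.le) zero_le_one, min_le_right _ _⟩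

lemma ramp_eq_one (hδ : 0 < δ) (ht : 1 + δ ≤ t) : ramp δ t = 1 :=
  min_eq_right ((one_le_div hδ).2 (by linarith))

lemma integral_indicator_Ioc_inv (hδ : 0 < δ) (ht : 1 ≤ t) :
    ∫ s in Ioc 1 t, (Ioc 1 (1 + δ)).indicator (fun _ => δ⁻¹) s = ramp δ t := by
  have hmin : 0 ≤ min t (1 + δ) - 1 := sub_nonneg.2 (le_min ht (by linarith))
  rw [setIntegral_indicator measurableSet_Ioc, Ioc_inter_Ioc, setIntegral_const, max_self,
    Measure.real, Real.volume_Ioc, ENNReal.toReal_ofReal hmin, smul_eq_mul, ← div_eq_mul_inv,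
    ← min_sub_sub_right, add_sub_cancel_left, ← min_div_div_right hδ.le, div_self hδ.ne', ramp]

lemma integrable_indicator_Ioc_inv_smul (δ : ℝ) (z : Conf d N) :
    Integrable fun t => (Ioc 1 (1 + δ)).indicator (fun _ => δ⁻¹) t • z :=
  ((integrable_indicator_iff measurableSet_Ioc).2
    (integrableOn_const measure_Ioc_lt_top.ne)).smul_const z

lemma mnorm_shiftDeriv_sq (hm : ∀ i, 0 < m i) (δ : ℝ) (z : Conf d N) (φ' : ℝ → Conf d N)
    (t : ℝ) :
    mnorm m (shiftDeriv δ z φ' t) ^ 2 = mnorm m (φ' t) ^ 2 + (Ioc 1 (1 + δ)).indicator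
      (fun s => 2 * δ⁻¹ * minnerCLM hm z (φ' s) + δ⁻¹ ^ 2 * mnorm m z ^ 2) t := by
  rw [shiftDeriv, mnorm_add_smul_sq hm]
  by_cases ht : t ∈ Ioc 1 (1 + δ)
  · simp only [indicator_of_mem ht, minnerCLM_apply]; ring
  · simp only [indicator_of_notMem ht]; ring

namespace InD

lemma integrableOn_mnorm_shiftDeriv_sq_sub (hm : ∀ i, 0 < m i) (h : InD m 1 ⊤ φ φ') (δ : ℝ)
    (z : Conf d N) :
    IntegrableOn (fun s => 2 * δ⁻¹ * minnerCLM hm z (φ' s) + δ⁻¹ ^ 2 * mnorm m z ^ 2)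
      (Ioc 1 (1 + δ)) :=
  (((minnerCLM hm z).integrable_comp (h.integrableOn _)).const_mul _).add
    (integrableOn_const measure_Ioc_lt_top.ne)

lemma shift (hm : ∀ i, 0 < m i) (h : InD m 1 ⊤ φ φ') (hδ : 0 < δ) (hz : NBodyHJ.inX m z) :
    InD m 1 ⊤ (shiftCurve δ z φ) (shiftDeriv δ z φ') := by
  have hind (t : ℝ) := (integrable_indicator_Ioc_inv_smul δ z).integrableOn (s := Ioc 1 t)
  refine ⟨by simp [shiftCurve, ramp, h.1], fun t ht _ => inX_add (h.inX ht) (inX_smul _ hz),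
    fun t ht _ => ?_, fun t _ _ => (h.integrableOn t).add (hind t), ?_⟩
  · unfold shiftCurve shiftDeriv
    rw [integral_add (h.integrableOn t) (hind t), ← h.eq_integral ht, integral_smul_const,
      integral_indicator_Ioc_inv hδ ht]
  · rw [timeSet_top]
    simp only [mnorm_shiftDeriv_sq hm]
    exact h.integrable_sq.add ((integrable_indicator_iff measurableSet_Ioc).2
      (h.integrableOn_mnorm_shiftDeriv_sq_sub hm δ z)).integrableOn

lemma energy_shiftDeriv (hm : ∀ i, 0 < m i) (h : InD m 1 ⊤ φ φ') (hδ : 0 < δ) (z : Conf d N) :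
    energy m (shiftDeriv δ z φ') =
      energy m φ' + 2 * minner m (δ⁻¹ • φ (1 + δ)) z + δ⁻¹ * mnorm m z ^ 2 := by
  have hlin := h.integrableOn_mnorm_shiftDeriv_sq_sub hm δ z
  have hpair := (minnerCLM hm z).integrable_comp (h.integrableOn (1 + δ))
  simp only [energy, mnorm_shiftDeriv_sq hm]
  rw [integral_add h.integrable_sq
      ((integrable_indicator_iff measurableSet_Ioc).2 hlin).integrableOn,
    setIntegral_indicator measurableSet_Ioc, inter_eq_self_of_subset_right Ioc_subset_Ioi_self,
    integral_add (hpair.const_mul _) (integrableOn_const measure_Ioc_lt_top.ne),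
    integral_const_mul, (minnerCLM hm z).integral_comp_comm (h.integrableOn _),
    ← h.eq_integral (by linarith), setIntegral_const, Real.volume_real_Ioc_of_le (by linarith),
    ← minnerCLM_apply hm, map_smul, smul_eq_mul, smul_eq_mul, add_sub_cancel_left]
  field_simp
  ring

lemma integrableOn_U_hypCurve (h : InD m 1 ⊤ φ φ') {T : ℝ}
    (hcol : ∀ t ∈ Icc 1 T, ¬ collision (hypCurve a y φ t)) :
    IntegrableOn (fun t => U m (hypCurve a y φ t)) (Ioc 1 T) := by
  have hcurve : ContinuousOn (hypCurve a y φ) (Icc 1 T) := by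
    have := h.continuousOn_Icc T
    unfold hypCurve
    fun_prop
  have hU : ContinuousOn (fun t => U m (hypCurve a y φ t)) (Icc 1 T) := fun t ht =>
    (contDiffAt_U m (hcol t ht)).continuousAt.comp_continuousWithinAt (hcurve t ht)
  exact hU.integrableOn_Icc.mono_set Ioc_subset_Icc_self

lemma mnorm_hypCurve_sub_le (hm : ∀ i, 0 < m i) (h : InD m 1 ⊤ φ φ') {R : ℝ}
    (hR : energy m φ' ≤ R) (a x y : Conf d N) (ht : t ∈ Icc 1 (1 + δ)) :
    mnorm m (hypCurve a y φ t - x) ≤ √δ * √R + δ * mnorm m a + mnorm m (y - x) := by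
  have hsplit : hypCurve a y φ t - x = φ t + (t - 1) • a + (y - x) := by
    unfold hypCurve; module
  have htδ : t - 1 ≤ δ := by linarith [ht.2]
  calc mnorm m (hypCurve a y φ t - x)
      ≤ mnorm m (φ t) + mnorm m ((t - 1) • a) + mnorm m (y - x) := by
        rw [hsplit]
        exact (mnorm_add_le hm _ _).trans (add_le_add_left (mnorm_add_le hm _ _) _)
    _ ≤ √δ * √R + δ * mnorm m a + mnorm m (y - x) := by
        rw [mnorm_smul hm, abs_of_nonneg (sub_nonneg.2 ht.1)]
        gcongr
        · exact (h.mnorm_le hm ht.1).trans (by gcongr)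
        · exact mnorm_nonneg m a

end InD

lemma hypCurve_shiftCurve (δ : ℝ) (a y y' : Conf d N) (φ : ℝ → Conf d N) (t : ℝ) :
    hypCurve a y' (shiftCurve δ (y - y') φ) t =
      hypCurve a y φ t + (1 - ramp δ t) • (y' - y) := by
  unfold hypCurve shiftCurve; module

lemma hypCurve_shiftCurve_eq (hδ : 0 < δ) (ht : 1 + δ ≤ t) :
    hypCurve a y' (shiftCurve δ (y - y') φ) t = hypCurve a y φ t := by
  rw [hypCurve_shiftCurve, ramp_eq_one hδ ht, sub_self, zero_smul, add_zero]

lemma mnorm_hypCurve_shiftCurve_sub_le (hm : ∀ i, 0 < m i) (hδ : 0 < δ) (ht : 1 ≤ t) :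
    mnorm m (hypCurve a y' (shiftCurve δ (y - y') φ) t - hypCurve a y φ t) ≤
      mnorm m (y' - y) := by
  obtain ⟨h0, h1⟩ := ramp_mem_Icc hδ ht
  rw [hypCurve_shiftCurve, add_sub_cancel_left, mnorm_smul hm, abs_of_nonneg (by linarith)]
  exact mul_le_of_le_one_left (mnorm_nonneg _ _) (by linarith)

lemma renormPotential_shiftCurve (m : Fin N → ℝ) (hδ : 0 < δ) (ht : 1 < t) :
    renormPotential m a y' (shiftCurve δ (y - y') φ) t =
      renormPotential m a y φ t + (Ioc 1 (1 + δ)).indicator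
        (fun s => U m (hypCurve a y' (shiftCurve δ (y - y') φ) s) - U m (hypCurve a y φ s)) t := by
  rcases le_or_gt t (1 + δ) with htδ | htδ
  · rw [indicator_of_mem (mem_Ioc.2 ⟨ht, htδ⟩), renormPotential, renormPotential]; ring
  · rw [indicator_of_notMem fun h => htδ.not_ge h.2, add_zero, renormPotential,
      renormPotential, hypCurve_shiftCurve_eq hδ htδ.le]

lemma FiniteAction.shift (hm : ∀ i, 0 < m i) (hφ : FiniteAction m a y φ φ') (hδ : 0 < δ)
    (hX : inX m (y - y')) {L : ℝ}
    (hcol : ∀ t ∈ Icc 1 (1 + δ), ¬ collision (hypCurve a y φ t))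
    (hcol' : ∀ t ∈ Icc 1 (1 + δ), ¬ collision (hypCurve a y' (shiftCurve δ (y - y') φ) t))
    (hL : ∀ t ∈ Icc 1 (1 + δ),
      U m (hypCurve a y' (shiftCurve δ (y - y') φ) t) - U m (hypCurve a y φ t) ≤ L) :
    FiniteAction m a y' (shiftCurve δ (y - y') φ) (shiftDeriv δ (y - y') φ') ∧
      realAction m a y' (shiftCurve δ (y - y') φ) (shiftDeriv δ (y - y') φ') ≤
        realAction m a y φ φ' + minner m (δ⁻¹ • φ (1 + δ)) (y - y') +
          δ⁻¹ * mnorm m (y - y') ^ 2 / 2 + δ * L := by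
  set ψ := shiftCurve δ (y - y') φ
  have hψ : InD m 1 ⊤ ψ (shiftDeriv δ (y - y') φ') := hφ.inD.shift hm hδ hX
  let D (t : ℝ) : ℝ := U m (hypCurve a y' ψ t) - U m (hypCurve a y φ t)
  have hD : IntegrableOn D (Ioc 1 (1 + δ)) :=
    (hψ.integrableOn_U_hypCurve hcol').sub (hφ.inD.integrableOn_U_hypCurve hcol)
  have hDind : IntegrableOn ((Ioc 1 (1 + δ)).indicator D) (Ioi 1) :=
    ((integrable_indicator_iff measurableSet_Ioc).2 hD).integrableOn
  have hpot : ∀ t ∈ Ioi (1 : ℝ), renormPotential m a y φ t + (Ioc 1 (1 + δ)).indicator D t =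
      renormPotential m a y' ψ t := fun t ht => (renormPotential_shiftCurve m hδ ht).symm
  have hDle : ∫ t in Ioc 1 (1 + δ), D t ≤ δ * L := by
    calc ∫ t in Ioc 1 (1 + δ), D t ≤ ∫ _ in Ioc 1 (1 + δ), L :=
          setIntegral_mono_on hD (integrableOn_const measure_Ioc_lt_top.ne) measurableSet_Ioc
            fun t ht => hL t (Ioc_subset_Icc_self ht)
      _ = δ * L := by
          rw [setIntegral_const, Real.volume_real_Ioc_of_le (by linarith), add_sub_cancel_left,
            smul_eq_mul]
  refine ⟨⟨hψ, ?_, (hφ.integrableOn.add hDind).congr_fun hpot measurableSet_Ioi⟩, ?_⟩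
  · filter_upwards [hφ.ae_not_collision, ae_restrict_mem measurableSet_Ioi] with t hnot ht
    rcases le_or_gt t (1 + δ) with htδ | htδ
    · exact hcol' t ⟨le_of_lt ht, htδ⟩
    · rwa [hypCurve_shiftCurve_eq hδ htδ.le]
  · unfold realAction
    rw [hφ.inD.energy_shiftDeriv hm hδ, ← setIntegral_congr_fun measurableSet_Ioi hpot,
      integral_add hφ.integrableOn hDind, setIntegral_indicator measurableSet_Ioc,
      inter_eq_self_of_subset_right Ioc_subset_Ioi_self]
    linarith

lemma eventually_exists_shift_realAction_le (hm : ∀ i, 0 < m i) (a : Conf d N)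
    (hx : ¬ collision x) (R : ℝ) {ε : ℝ} (hε : 0 < ε) :
    ∀ᶠ δ in 𝓝[>] (0 : ℝ), ∃ r > 0, ∀ y y' : Conf d N, inX m y → inX m y' →
      mnorm m (y - x) < r → mnorm m (y' - x) < r → ∀ φ φ' : ℝ → Conf d N,
      FiniteAction m a y φ φ' → energy m φ' ≤ R → ∃ ψ ψ' : ℝ → Conf d N,
        FiniteAction m a y' ψ ψ' ∧ realAction m a y' ψ ψ' ≤ realAction m a y φ φ' +
          minner m (δ⁻¹ • φ (1 + δ)) (y - y') + ε * mnorm m (y' - y) := by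
  obtain ⟨ρ, hρ, C, hC, hcol, hlip⟩ := exists_lipschitz_U hm hx
  have htube : ∀ᶠ δ in 𝓝[>] (0 : ℝ), √δ * √R + δ * mnorm m a < ρ / 2 := by
    have hcont : Continuous fun δ : ℝ => √δ * √R + δ * mnorm m a := by fun_prop
    exact (((hcont.tendsto' 0 0 (by simp)).mono_left nhdsWithin_le_nhds).eventually_lt_const
      (half_pos hρ))
  have hsmall : ∀ᶠ δ in 𝓝[>] (0 : ℝ), C * δ < ε / 2 :=
    (((continuous_const_mul C).tendsto' 0 0 (mul_zero C)).mono_left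
      nhdsWithin_le_nhds).eventually_lt_const (half_pos hε)
  filter_upwards [htube, hsmall, self_mem_nhdsWithin] with δ htube hsmall (hδ : 0 < δ)
  refine ⟨min (ρ / 8) (ε * δ / 2), by positivity, fun y y' hy hy' hyx hyx' φ φ' hφ hR => ?_⟩
  rw [lt_min_iff] at hyx hyx'
  have hyy' : mnorm m (y' - y) ≤ mnorm m (y' - x) + mnorm m (y - x) := by
    rw [mnorm_sub_rev hm y x, ← sub_add_sub_cancel y' x y]; exact mnorm_add_le hm _ _
  have hγ : ∀ t ∈ Icc 1 (1 + δ), mnorm m (hypCurve a y φ t - x) < 5 / 8 * ρ := fun t ht => by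
    linarith [hφ.inD.mnorm_hypCurve_sub_le hm hR a x y ht]
  have hγ' : ∀ t ∈ Icc 1 (1 + δ),
      mnorm m (hypCurve a y' (shiftCurve δ (y - y') φ) t - x) < ρ := fun t ht => by
    rw [← sub_add_sub_cancel _ (hypCurve a y φ t) x]
    linarith [mnorm_add_le hm (hypCurve a y' (shiftCurve δ (y - y') φ) t - hypCurve a y φ t)
      (hypCurve a y φ t - x), hγ t ht,
      mnorm_hypCurve_shiftCurve_sub_le (a := a) (y := y) (y' := y') (φ := φ) hm hδ ht.1]
  obtain ⟨hψ, hle⟩ := hφ.shift hm hδ (inX_sub hy hy') (L := C * mnorm m (y' - y))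
    (fun t ht => hcol _ ((hγ t ht).trans (by linarith))) (fun t ht => hcol _ (hγ' t ht))
    fun t ht => (hlip _ _ (hγ' t ht) ((hγ t ht).trans (by linarith))).trans
      (mul_le_mul_of_nonneg_left (mnorm_hypCurve_shiftCurve_sub_le hm hδ ht.1) hC)
  refine ⟨_, _, hψ, hle.trans ?_⟩
  have hquad : δ⁻¹ * mnorm m (y' - y) ^ 2 ≤ ε * mnorm m (y' - y) := by
    rw [inv_mul_le_iff₀ hδ]
    nlinarith [mnorm_nonneg m (y' - y)]
  rw [mnorm_sub_rev hm y y']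
  nlinarith [mnorm_nonneg m (y' - y)]

end Shift

/-! ### Differentiability -/

section Differentiability

variable {m : Fin N → ℝ} {a x w p : Conf d N} {φ φ' : ℝ → Conf d N}

lemma eventually_mnorm_slope_sub_lt (hm : ∀ i, 0 < m i)
    (hw : HasDerivWithinAt φ w (Ici (1 : ℝ)) 1) (h1 : φ 1 = 0) {ε : ℝ} (hε : 0 < ε) :
    ∀ᶠ δ in 𝓝[>] (0 : ℝ), mnorm m (δ⁻¹ • φ (1 + δ) - w) < ε := by
  have hshift : Tendsto (fun δ : ℝ => 1 + δ) (𝓝[>] 0) (𝓝[>] 1) := by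
    refine tendsto_nhdsWithin_iff.2 ⟨?_, ?_⟩
    · exact ((continuous_const_add (1 : ℝ)).tendsto' 0 1 (add_zero 1)).mono_left nhdsWithin_le_nhds
    · filter_upwards [self_mem_nhdsWithin] with δ (hδ : 0 < δ) using lt_add_of_pos_right 1 hδ
  have hslope := ((hasDerivWithinAt_iff_tendsto_slope' self_notMem_Ioi).1 hw.Ioi_of_Ici).comp hshift
  simp only [Function.comp_def, slope, vsub_eq_sub, add_sub_cancel_left, h1, sub_zero] at hslope
  exact hslope.eventually ((hasBasis_nhds_mnorm hm w).mem_of_mem hε)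

lemma eventually_forall_mnorm_slope_sub_lt_of_unique (hm : ∀ i, 0 < m i) (ha : ¬ collision a)
    (huniq : ∀ ψ ψ' : ℝ → Conf d N, InD m 1 ⊤ ψ ψ' →
      hypAction m a x ⊤ ψ ψ' = hypInf m a x ⊤ → ∀ t : ℝ, 1 ≤ t → ψ t = φ t)
    (hw : HasDerivWithinAt φ w (Ici (1 : ℝ)) 1) (h1 : φ 1 = 0) {ε : ℝ} (hε : 0 < ε) :
    ∀ᶠ δ in 𝓝[>] (0 : ℝ), ∀ᶠ p in 𝓝 (x, minAction m a x), ∀ χ χ' : ℝ → Conf d N,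
      FiniteAction m a p.1 χ χ' → realAction m a p.1 χ χ' ≤ p.2 →
        mnorm m (δ⁻¹ • χ (1 + δ) - w) < ε := by
  filter_upwards [eventually_mnorm_slope_sub_lt hm hw h1 (half_pos hε), self_mem_nhdsWithin]
    with δ hslope (hδ : 0 < δ)
  filter_upwards [eventually_mnorm_sub_lt_of_unique hm ha huniq (t := 1 + δ) (by linarith)
    (mul_pos hδ (half_pos hε))] with p hp χ χ' hχ hχp
  calc mnorm m (δ⁻¹ • χ (1 + δ) - w)
      = mnorm m (δ⁻¹ • (χ (1 + δ) - φ (1 + δ)) + (δ⁻¹ • φ (1 + δ) - w)) := by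
        rw [smul_sub, sub_add_sub_cancel]
    _ ≤ δ⁻¹ * mnorm m (χ (1 + δ) - φ (1 + δ)) + mnorm m (δ⁻¹ • φ (1 + δ) - w) := by
        refine (mnorm_add_le hm _ _).trans_eq ?_
        rw [mnorm_smul hm, abs_of_pos (inv_pos.2 hδ)]
    _ < ε / 2 + ε / 2 := add_lt_add ((inv_mul_lt_iff₀ hδ).2 (hp χ χ' hχ hχp)) hslope
    _ = ε := add_halves ε

lemma hypValue_sub_sub_minner_neg (m : Fin N → ℝ) (a x w y : Conf d N) :
    hypValue m a y - hypValue m a x - minner m (-(a + w)) (y - x) =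
      minAction m a y - minAction m a x + minner m w (y - x) := by
  rw [hypValue, hypValue, minAction, minAction, minner_neg_left, minner_add_left,
    minner_sub_right m a]
  ring

lemma FiniteAction.eventually_minAction_lt (hm : ∀ i, 0 < m i) (ha : ¬ collision a)
    (hx : inOmega m x) (hφ : FiniteAction m a x φ φ') {c : ℝ} (hc : realAction m a x φ φ' < c) :
    ∀ᶠ y in 𝓝[setX m] x, (∃ ψ ψ' : ℝ → Conf d N, FiniteAction m a y ψ ψ') ∧
      minAction m a y < c := by
  obtain ⟨δ, r, hr, hshift⟩ := (eventually_exists_shift_realAction_le hm a hx.2 (energy m φ')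
    one_pos).exists
  have hcont : Continuous fun y => realAction m a x φ φ' +
      minnerCLM hm (x - y) (δ⁻¹ • φ (1 + δ)) + 1 * mnorm m (y - x) := by
    have := continuous_mnorm (d := d) hm
    simp only [minnerCLM_apply, minner]
    fun_prop
  have hlt := (hcont.tendsto' x (realAction m a x φ φ')
    (by simp [minnerCLM_apply, minner])).eventually_lt_const hc
  filter_upwards [self_mem_nhdsWithin, mem_nhdsWithin_of_mem_nhds
    ((hasBasis_nhds_mnorm hm x).mem_of_mem hr), mem_nhdsWithin_of_mem_nhds hlt]
    with y hy hyr hylt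
  obtain ⟨ψ, ψ', hψ, hle⟩ := hshift x y hx.1 hy (by simpa using hr) hyr φ φ' hφ le_rfl
  rw [minnerCLM_apply] at hylt
  exact ⟨⟨ψ, ψ', hψ⟩, (hψ.minAction_le hm ha).trans_lt (hle.trans_lt hylt)⟩

/-- The minimizer at `x`, shifted to a nearby `y`, is a competitor at `y`. -/
lemma FiniteAction.inSuperdiff_hypValue (hm : ∀ i, 0 < m i) (ha : ¬ collision a)
    (hx : inOmega m x) (hφ : FiniteAction m a x φ φ')
    (hmin : realAction m a x φ φ' = minAction m a x)
    (hw : HasDerivWithinAt φ w (Ici (1 : ℝ)) 1) :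
    InSuperdiff m (hypValue m a) x (-(a + w)) := by
  intro ε hε
  obtain ⟨δ, hslope, r, hr, hshift⟩ := ((eventually_mnorm_slope_sub_lt hm hw hφ.inD.1
    (half_pos hε)).and (eventually_exists_shift_realAction_le hm a hx.2 (energy m φ')
      (half_pos hε))).exists
  filter_upwards [self_mem_nhdsWithin, mem_nhdsWithin_of_mem_nhds
    ((hasBasis_nhds_mnorm hm x).mem_of_mem hr)] with y hy hyr
  obtain ⟨ψ, ψ', hψ, hle⟩ := hshift x y hx.1 hy.1 (by simpa using hr) hyr φ φ' hφ le_rfl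
  have hpair : minner m (δ⁻¹ • φ (1 + δ) - w) (x - y) ≤ ε / 2 * mnorm m (y - x) := by
    rw [mnorm_sub_rev hm y x]
    exact (minner_le hm _ _).trans (mul_le_mul_of_nonneg_right hslope.le (mnorm_nonneg _ _))
  rw [minner_sub_left, minner_sub_right m w] at hpair
  rw [hypValue_sub_sub_minner_neg, minner_sub_right]
  linarith [hψ.minAction_le hm ha]

/-- An almost minimizer at `y`, shifted back to `x`, is a competitor at `x`; its position at the
end of the shift is close to that of the minimizer at `x` by stability. -/
lemma FiniteAction.inSubdiff_hypValue (hm : ∀ i, 0 < m i) (ha : ¬ collision a)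
    (hx : inOmega m x) (hφ : FiniteAction m a x φ φ')
    (hmin : realAction m a x φ φ' = minAction m a x)
    (huniq : ∀ ψ ψ' : ℝ → Conf d N, InD m 1 ⊤ ψ ψ' →
      hypAction m a x ⊤ ψ ψ' = hypInf m a x ⊤ → ∀ t : ℝ, 1 ≤ t → ψ t = φ t)
    (hw : HasDerivWithinAt φ w (Ici (1 : ℝ)) 1) :
    InSubdiff m (hypValue m a) x (-(a + w)) := by
  intro ε hε
  have hε4 : 0 < ε / 4 := by positivity
  obtain ⟨C, hC⟩ := exists_energy_le hm ha (mnorm m (x - a) + 1)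
  obtain ⟨δ, hstab, r, hr, hshift⟩ := ((eventually_forall_mnorm_slope_sub_lt_of_unique hm ha
    huniq hw hφ.inD.1 (half_pos hε)).and (eventually_exists_shift_realAction_le hm a hx.2
      (4 * (minAction m a x + 1) + C) hε4)).exists
  rw [nhds_prod_eq, eventually_prod_iff] at hstab
  obtain ⟨_, hnear, _, hlevel, hstab⟩ := hstab
  obtain ⟨c, hc, hcI⟩ := ((hlevel.filter_mono nhdsWithin_le_nhds).and
    (Ioo_mem_nhdsGT (lt_add_one (minAction m a x)))).exists
  filter_upwards [self_mem_nhdsWithin, mem_nhdsWithin_of_mem_nhds hnear,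
    mem_nhdsWithin_of_mem_nhds ((hasBasis_nhds_mnorm hm x).mem_of_mem (lt_min hr one_pos)),
    nhdsWithin_mono x sdiff_subset (hφ.eventually_minAction_lt hm ha hx (hmin.trans_lt hcI.1))]
    with y hy hynear hyr ⟨⟨ψ, ψ', hψ⟩, hyc⟩
  obtain ⟨hyr, hy1⟩ := lt_min_iff.1 hyr
  have hs : 0 < mnorm m (y - x) := mnorm_pos hm (sub_ne_zero.2 hy.2)
  obtain ⟨χ, χ', hχ, hχlt⟩ := hψ.exists_realAction_lt hm ha
    (lt_min (lt_add_of_pos_right _ (mul_pos hε4 hs)) hyc)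
  obtain ⟨hχy, hχc⟩ := lt_min_iff.1 hχlt
  have hya : mnorm m (y - a) ≤ mnorm m (x - a) + 1 := by
    rw [← sub_add_sub_cancel y x a]
    linarith [mnorm_add_le hm (y - x) (x - a)]
  obtain ⟨ζ, ζ', hζ, hle⟩ := hshift y x hy.1 hx.1 hyr (by simpa using hr) χ χ' hχ
    (by linarith [hC y hya χ χ' hχ, hcI.2])
  have hpair : minner m (δ⁻¹ • χ (1 + δ) - w) (y - x) ≤ ε / 2 * mnorm m (y - x) :=
    (minner_le hm _ _).trans (mul_le_mul_of_nonneg_right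
      (hstab hynear hc χ χ' hχ hχc.le).le (mnorm_nonneg _ _))
  rw [minner_sub_left] at hpair
  rw [mnorm_sub_rev hm x y] at hle
  rw [hypValue_sub_sub_minner_neg]
  linarith [hζ.minAction_le hm ha]

lemma InSubdiff.eventually_abs_sub_le {v : Conf d N → ℝ} (hsub : InSubdiff m v x p)
    (hsuper : InSuperdiff m v x p) {ε : ℝ} (hε : 0 < ε) :
    ∀ᶠ y in 𝓝[setX m] x, |v y - v x - minner m p (y - x)| ≤ ε * mnorm m (y - x) := by
  filter_upwards [eventually_nhdsWithin_iff.1 (hsub ε hε) |> mem_nhdsWithin_of_mem_nhds,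
    eventually_nhdsWithin_iff.1 (hsuper ε hε) |> mem_nhdsWithin_of_mem_nhds,
    self_mem_nhdsWithin] with y hlow hupp hy
  by_cases hyx : y = x
  · simp [hyx, minner]
  · exact abs_le.2 ⟨hlow ⟨hy, hyx⟩, hupp ⟨hy, hyx⟩⟩

/-- If no curve has finite action, then every curve is a minimizer. -/
lemma eq_zero_of_inX_of_hypInf_eq_top (hm : ∀ i, 0 < m i)
    (huniq : ∀ ψ ψ' : ℝ → Conf d N, InD m 1 ⊤ ψ ψ' →
      hypAction m a x ⊤ ψ ψ' = hypInf m a x ⊤ → ∀ t : ℝ, 1 ≤ t → ψ t = φ t)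
    (htop : hypInf m a x ⊤ = ⊤) {z : Conf d N} (hz : inX m z) : z = 0 := by
  have hall {ψ ψ' : ℝ → Conf d N} (hψ : InD m 1 ⊤ ψ ψ') : ψ 2 = φ 2 :=
    huniq ψ ψ' hψ (le_antisymm (le_top.trans_eq htop.symm) (hypInf_le a x hψ)) 2 one_le_two
  have hshift := (hall ((InD.zero m).shift hm one_pos hz)).trans (hall (InD.zero m)).symm
  simpa [shiftCurve, ramp_eq_one one_pos one_add_one_eq_two.le] using hshift

end Differentiability

theorem value_function_differentiable_at_regular_point_general {m : Fin N → ℝ}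
    (hm : ∀ i, 0 < m i) {a : Conf d N} (ha : ¬ collision a) {x : Conf d N} (hx : inOmega m x)
    {φx φx' : ℝ → Conf d N} (hφx : InD m 1 ⊤ φx φx')
    (hmin : hypAction m a x ⊤ φx φx' = hypInf m a x ⊤)
    (huniq : ∀ ψ ψ' : ℝ → Conf d N, InD m 1 ⊤ ψ ψ' →
      hypAction m a x ⊤ ψ ψ' = hypInf m a x ⊤ → ∀ t : ℝ, 1 ≤ t → ψ t = φx t)
    {w : Conf d N} (hw : HasDerivWithinAt φx w (Ici (1 : ℝ)) 1) :
    ∀ ε > (0 : ℝ), ∀ᶠ y in 𝓝[setX m] x,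
      |hypValue m a y - hypValue m a x + minner m (a + w) (y - x)| ≤ ε * mnorm m (y - x) := by
  intro ε hε
  by_cases htop : hypAction m a x ⊤ φx φx' = ⊤
  · filter_upwards [self_mem_nhdsWithin] with y hy
    have hyx : y = x := sub_eq_zero.1
      (eq_zero_of_inX_of_hypInf_eq_top hm huniq (hmin ▸ htop) (inX_sub hy hx.1))
    simp [hyx, minner]
  · have hφ := hφx.finiteAction htop
    have hφmin := hφ.realAction_eq_minAction hmin
    simpa only [minner_neg_left, sub_neg_eq_add] using
      (hφ.inSubdiff_hypValue hm ha hx hφmin huniq hw).eventually_abs_sub_le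
        (hφ.inSuperdiff_hypValue hm ha hx hφmin hw) hε

/-- **Differentiability of the value function at regular points** : if `x ∈ Ω`, `A_x` has a
unique minimizer `φˣ` on `D₀^{1,2}(1,+∞)` (uniqueness meaning that any minimizer agrees
with `φˣ` on `[1,∞)`), and `φˣ` has a right derivative `w = φ̇ˣ(1)` at `t = 1`, then `v` is
differentiable at `x` (within `X`) with differential `z ↦ −⟨a + w, z⟩_M`; that is, in terms
of the motion `γˣ(t) = a t + φˣ(t) + x − a`, the mass-gradient of `v` at `x` is `−γ̇ˣ(1)`. -/
theorem value_function_differentiable_at_regular_point {d N : ℕ} (hd : 2 ≤ d) (hN : 2 ≤ N)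
    (m : Fin N → ℝ) (hm : ∀ i, 0 < m i)
    (a : Conf d N) (ha : inOmega m a)
    (x : Conf d N) (hx : inOmega m x)
    (φx φx' : ℝ → Conf d N) (hφx : InD m 1 ⊤ φx φx')
    (hmin : hypAction m a x ⊤ φx φx' = hypInf m a x ⊤)
    (huniq : ∀ ψ ψ' : ℝ → Conf d N, InD m 1 ⊤ ψ ψ' →
      hypAction m a x ⊤ ψ ψ' = hypInf m a x ⊤ → ∀ t : ℝ, 1 ≤ t → ψ t = φx t)
    (w : Conf d N) (hw : HasDerivWithinAt φx w (Set.Ici (1:ℝ)) 1) :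
    ∀ ε > (0:ℝ), ∀ᶠ y in nhdsWithin x (setX m),
      |hypValue m a y - hypValue m a x + minner m (a + w) (y - x)| ≤
        ε * mnorm m (y - x) :=
  value_function_differentiable_at_regular_point_general hm ha.2 hx hφx hmin huniq hw

end NBodyHJ
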